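/- In any complete k-partite graph with parts of sizes x1,...,xk, the number of 5-cycle subgraphs is ν(C5) = 12 e5(x) + 6 Σ_{a} (xa choose 2)·e3(x without a) + 4 Σ_{a<b} (xa choose 2)(xb choose 2)·(Σ_{c≠a,b} xc), where e_j denotes the elementary symmetric polynomials. -/

import Mathlib

/-- The number of (not necessarily induced) subgraphs of `G` isomorphic to the 5-cycle. -/
noncomputable def nuC5 {V : Type*} (G : SimpleGraph V) : ℕ :=
  Nat.card {H : G.Subgraph // Nonempty (H.coe ≃g SimpleGraph.cycleGraph 5)}

/-!
A subgraph isomorphic to `C₅` is the image of exactly `|Aut C₅| = 10` labelled copies of `C₅`. A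
labelled copy of `H` in a complete multipartite graph is a proper colouring of `H` by the parts
together with, for each part, an injection of the colour class into that part; hence a colouring
contributes a product of falling factorials. In a proper colouring of `C₅` the only coincidences of
colours are along diagonals, and two monochromatic diagonals never share a vertex, since their other
ends are adjacent. So the set of monochromatic diagonals is empty, a single diagonal, or one of five
disjoint pairs, and in each of these eleven cases the colourings are the injective recolourings of a
single one. Sums over injections are elementary symmetric sums up to factorials.
-/

open Finset SimpleGraph Function

section Copies

variable {V W : Type*} (G : SimpleGraph V) (H : SimpleGraph W)

/-- A labelled copy of `H` in `G` is a subgraph of `G` together with an isomorphism from `H`. -/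
noncomputable def copyEquivSigmaIso : Copy H G ≃ Σ S : G.Subgraph, H ≃g S.coe :=
  .symm <| .ofBijective
    (fun e ↦ ⟨e.1.hom.comp e.2.toHom, e.1.hom_injective.comp e.2.injective⟩) <| by
    constructor
    · rintro ⟨S, e⟩ ⟨S', e'⟩ h
      obtain rfl : S = S' := by
        simpa [Copy.toSubgraph, Subgraph.map_comp] using congrArg Copy.toSubgraph h
      congr
      ext w
      exact congrArg (fun f : Copy H G ↦ f w) h
    · exact fun f ↦ ⟨⟨f.toSubgraph, f.isoToSubgraph⟩, rfl⟩

theorem labelledCopyCount_eq_natCard [Fintype V] [Fintype W] :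
    G.labelledCopyCount H = Nat.card (Copy H G) := by
  classical
  rw [labelledCopyCount, Nat.card_eq_fintype_card]

theorem labelledCopyCount_eq_copyCount_mul_card_aut [Fintype V] [Fintype W] :
    G.labelledCopyCount H = G.copyCount H * Nat.card (H ≃g H) := by
  classical
  have card_iso (S : G.Subgraph) :
      Nat.card (H ≃g S.coe) = if Nonempty (H ≃g S.coe) then Nat.card (H ≃g H) else 0 := by
    split_ifs with hS
    · obtain ⟨e⟩ := hS
      exact Nat.card_congr
        ⟨fun f ↦ f.trans e.symm, fun f ↦ f.trans e, fun f ↦ by ext; simp, fun f ↦ by ext; simp⟩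
    · exact Nat.card_eq_zero.2 (.inl (not_nonempty_iff.1 hS))
  have (S : G.Subgraph) : Finite (H ≃g S.coe) := DFunLike.finite _
  rw [labelledCopyCount_eq_natCard, Nat.card_congr (copyEquivSigmaIso G H), Nat.card_sigma]
  simp_rw [card_iso]
  rw [← sum_filter, sum_const, smul_eq_mul, copyCount]

theorem nuC5_eq_copyCount [Fintype V] : nuC5 G = G.copyCount (cycleGraph 5) := by
  classical
  have iso_comm (S : G.Subgraph) :
      Nonempty (S.coe ≃g cycleGraph 5) ↔ Nonempty (cycleGraph 5 ≃g S.coe) :=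
    ⟨Nonempty.map .symm, Nonempty.map .symm⟩
  rw [nuC5, copyCount, Nat.card_eq_fintype_card, Fintype.card_subtype]
  simp_rw [iso_comm]

end Copies

section CycleAutomorphisms

variable {n : ℕ}

theorem cycleGraph_aut_apply_add_one (f : cycleGraph (n + 3) ≃g cycleGraph (n + 3))
    (i : Fin (n + 3)) : f (i + 1) = f i + (f 1 - f 0) := by
  have step (j : Fin (n + 3)) : f (j + 1) - f j = 1 ∨ f (j + 1) - f j = -1 := by
    have : (cycleGraph (n + 3)).Adj (f (j + 1)) (f j) :=
      f.map_adj_iff.2 (by rw [cycleGraph_adj, add_sub_cancel_left]; exact .inl rfl)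
    rwa [cycleGraph_adj, ← neg_sub (f (j + 1)), neg_eq_iff_eq_neg] at this
  have no_backtrack (j : Fin (n + 3)) : f (j + 1 + 1) - f (j + 1) ≠ -(f (j + 1) - f j) := by
    rw [neg_sub, Ne, sub_left_inj, f.injective.eq_iff, add_assoc, add_eq_left]
    simp [Fin.ext_iff, Fin.val_add, Nat.mod_eq_of_lt]
  have step_succ (j : Fin (n + 3)) : f (j + 1 + 1) - f (j + 1) = f (j + 1) - f j := by
    have := no_backtrack j
    rcases step j with h | h <;> rcases step (j + 1) with h' | h' <;> simp_all
  suffices f (i + 1) - f i = f 1 - f 0 by rw [← this, add_sub_cancel]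
  induction i using Fin.induction with
  | zero => simp
  | succ i ih => rw [← Fin.coeSucc_eq_succ, step_succ, ih]

theorem cycleGraph_aut_ext {f g : cycleGraph (n + 3) ≃g cycleGraph (n + 3)} (h₀ : f 0 = g 0)
    (h₁ : f 1 = g 1) : f = g := by
  ext i : 1
  induction i using Fin.induction with
  | zero => exact h₀
  | succ i ih =>
    rw [← Fin.coeSucc_eq_succ, cycleGraph_aut_apply_add_one f, cycleGraph_aut_apply_add_one g,
      ih, h₀, h₁]

theorem exists_cycleGraph_aut {u v : Fin (n + 3)} (h : (cycleGraph (n + 3)).Adj u v) :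
    ∃ f : cycleGraph (n + 3) ≃g cycleGraph (n + 3), f 0 = u ∧ f 1 = v := by
  rcases cycleGraph_adj.1 h with h | h
  · exact ⟨⟨.subLeft u, by simp [cycleGraph_adj, or_comm]⟩, by simp, by simp [← h]⟩
  · exact ⟨⟨.addLeft u, by simp [cycleGraph_adj]⟩, by simp, by simp [← h]⟩

-- An automorphism is determined by the dart to which it sends `(0, 1)`, which is arbitrary.
theorem card_aut_cycleGraph (n : ℕ) :
    Nat.card (cycleGraph (n + 3) ≃g cycleGraph (n + 3)) = 2 * (n + 3) := by
  let toDart (f : cycleGraph (n + 3) ≃g cycleGraph (n + 3)) : (cycleGraph (n + 3)).Dart :=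
    ⟨(f 0, f 1), f.map_adj_iff.2 (by simp [cycleGraph_adj])⟩
  have toDart_bijective : Bijective toDart := by
    constructor
    · intro f g h
      simp only [toDart, Dart.mk.injEq, Prod.mk.injEq] at h
      exact cycleGraph_aut_ext h.1 h.2
    · intro d
      obtain ⟨f, h₀, h₁⟩ := exists_cycleGraph_aut d.adj
      exact ⟨f, Dart.ext _ _ (Prod.ext h₀ h₁)⟩
  rw [Nat.card_congr (.ofBijective toDart toDart_bijective), Nat.card_eq_fintype_card,
    dart_card_eq_sum_degrees]
  simp [cycleGraph_degree_three_le, mul_comm]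

end CycleAutomorphisms

section SumEmbedding

variable {κ ι : Type*} [Fintype κ] [Fintype ι]

theorem card_embedding_univ_map_eq [DecidableEq ι] {s : Finset ι} (hs : #s = Fintype.card κ) :
    #{e : κ ↪ ι | univ.map e = s} = (Fintype.card κ).factorial := by
  classical
  have card_eq : Fintype.card κ = Fintype.card s := by rw [Fintype.card_coe, hs]
  rw [← Fintype.card_equiv (Fintype.equivOfCardEq card_eq), ← card_univ]
  refine (card_bij (fun φ _ ↦ φ.toEmbedding.trans (.subtype (· ∈ s))) ?_ ?_ ?_).symm
  · intro φ _
    simp [← Finset.map_map, attach_map_val]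
  · intro φ _ ψ _ h
    ext k
    exact DFunLike.congr_fun h k
  · intro e he
    have mem_s (k : κ) : e k ∈ s := by simp [← (mem_filter.1 he).2]
    let e' : κ → s := fun k ↦ ⟨e k, mem_s k⟩
    have e'_bijective : Bijective e' := (Fintype.bijective_iff_injective_and_card e').2
      ⟨fun _ _ h ↦ e.injective (congrArg Subtype.val h), card_eq⟩
    exact ⟨.ofBijective e' e'_bijective, mem_univ _, rfl⟩

theorem sum_embedding_univ_map {M : Type*} [AddCommMonoid M] (F : Finset ι → M) :
    ∑ e : κ ↪ ι, F (univ.map e) =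
      (Fintype.card κ).factorial • ∑ s ∈ univ.powersetCard (Fintype.card κ), F s := by
  classical
  have maps_to (e : κ ↪ ι) (_ : e ∈ univ) :
      univ.map e ∈ univ.powersetCard (Fintype.card κ) := by
    simp
  rw [← sum_fiberwise_of_maps_to maps_to, smul_sum]
  refine sum_congr rfl fun s hs ↦ ?_
  rw [← card_embedding_univ_map_eq (mem_powersetCard_univ.1 hs), ← sum_const]
  exact sum_congr rfl fun e he ↦ by rw [(mem_filter.1 he).2]

variable {R : Type*} [CommSemiring R] (f g : ι → R)

theorem sum_embedding_prod :
    ∑ e : κ ↪ ι, ∏ j, f (e j) = (Fintype.card κ).factorial *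
      ∑ s ∈ univ.powersetCard (Fintype.card κ), ∏ i ∈ s, f i := by
  rw [← nsmul_eq_mul, ← sum_embedding_univ_map]
  simp only [prod_map]

theorem sum_embedding_option_prod [DecidableEq ι] :
    ∑ e : Option κ ↪ ι, g (e none) * ∏ j, f (e (some j)) = (Fintype.card κ).factorial *
      ∑ s ∈ univ.powersetCard (Fintype.card κ), (∏ i ∈ s, f i) * ∑ i ∈ univ \ s, g i := by
  rw [← nsmul_eq_mul, ← sum_embedding_univ_map,
    ← (Embedding.optionEmbeddingEquiv κ ι).symm.sum_comp, Fintype.sum_sigma]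
  refine sum_congr rfl fun e _ ↦ ?_
  have mem_compl (i : ι) : i ∈ univ \ univ.map e ↔ i ∈ (Set.range e)ᶜ := by simp
  rw [prod_map, mul_comm, sum_mul, sum_subtype _ mem_compl]
  rfl

theorem sum_powersetCard_mul_sum_sdiff [DecidableEq ι] (n : ℕ) (F : Finset ι → R) :
    ∑ s ∈ univ.powersetCard n, F s * ∑ i ∈ univ \ s, g i =
      ∑ i, g i * ∑ s ∈ (univ.erase i).powersetCard n, F s := by
  simp_rw [mul_sum]
  rw [sum_comm' (t' := univ) (s' := fun i ↦ (univ.erase i).powersetCard n)]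
  · simp_rw [mul_comm]
  · intro s i
    simp [mem_powersetCard, subset_erase, and_comm]

end SumEmbedding

section Coloring

variable {W ι κ : Type*} {H : SimpleGraph W} {V : ι → Type*}

/-- The labelled copy of `H` in a complete multipartite graph that sends each vertex to the part
named by its colour, injectively on every colour class. -/
def copyOfColoring (χ : H.Coloring ι) (e : ∀ i, {w // χ w = i} ↪ V i) :
    Copy H (completeMultipartiteGraph V) where
  toHom := ⟨fun w ↦ ⟨χ w, e (χ w) ⟨w, rfl⟩⟩, fun h ↦ χ.valid h⟩
  injective' v w h := by
    have apply_eq {i : ι} (u : {u // χ u = i}) :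
        (⟨χ u, e (χ u) ⟨u, rfl⟩⟩ : Σ i, V i) = ⟨i, e i u⟩ := by
      obtain ⟨u, rfl⟩ := u
      rfl
    have color_eq : χ v = χ w := congrArg Sigma.fst h
    have := (apply_eq ⟨v, color_eq⟩).symm.trans h
    simpa using (e _).injective (sigma_mk_injective this)

theorem copyOfColoring_apply (χ : H.Coloring ι) (e : ∀ i, {w // χ w = i} ↪ V i) {i : ι}
    (w : {w // χ w = i}) : copyOfColoring χ e w = ⟨i, e i w⟩ := by
  obtain ⟨w, rfl⟩ := w
  rfl

theorem copyOfColoring_bijective (H : SimpleGraph W) (V : ι → Type*) :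
    Bijective fun p : Σ χ : H.Coloring ι, ∀ i, {w // χ w = i} ↪ V i ↦
      copyOfColoring p.1 p.2 := by
  constructor
  · rintro ⟨χ, e⟩ ⟨χ', e'⟩ h
    obtain rfl : χ = χ' := by
      ext w
      exact congrArg (fun f : Copy H (completeMultipartiteGraph V) ↦ (f w).1) h
    congr
    ext i w
    apply sigma_mk_injective
    rw [← copyOfColoring_apply χ e w, ← copyOfColoring_apply χ e' w]
    exact DFunLike.congr_fun h (w : W)
  · intro f
    let χ : H.Coloring ι := (completeMultipartiteGraph.coloring V).comp f.toHom
    have exists_lift {i : ι} (w : {w // χ w = i}) : ∃ v : V i, f w = ⟨i, v⟩ := by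
      obtain ⟨w, rfl⟩ := w
      exact ⟨(f w).2, rfl⟩
    choose lift f_eq using @exists_lift
    have lift_injective (i : ι) : Injective (lift (i := i)) := fun v w h ↦
      Subtype.ext <| f.injective <| (f_eq v).trans <| h ▸ (f_eq w).symm
    refine ⟨⟨χ, fun i ↦ ⟨lift, lift_injective i⟩⟩, ?_⟩
    ext w : 1
    exact (f_eq ⟨w, rfl⟩).symm

variable [Fintype W] [Fintype ι]

theorem labelledCopyCount_completeMultipartiteGraph [DecidableEq ι] (H : SimpleGraph W)
    (V : ι → Type*) [∀ i, Fintype (V i)] :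
    (completeMultipartiteGraph V).labelledCopyCount H =
      ∑ χ : H.Coloring ι, ∏ i, (Fintype.card (V i)).descFactorial #{w | χ w = i} := by
  classical
  rw [labelledCopyCount_eq_natCard,
    ← Nat.card_congr (.ofBijective _ (copyOfColoring_bijective H V)), Nat.card_sigma]
  refine sum_congr rfl fun χ _ ↦ ?_
  simp_rw [Nat.card_pi, Nat.card_eq_fintype_card, Fintype.card_embedding_eq, Fintype.card_subtype]

variable [Fintype κ]

theorem prod_descFactorial_card_recolorOfEmbedding [DecidableEq ι] [DecidableEq κ] (x : ι → ℕ)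
    (χ : H.Coloring κ) (e : κ ↪ ι) :
    ∏ i, (x i).descFactorial #{w | H.recolorOfEmbedding e χ w = i} =
      ∏ j, (x (e j)).descFactorial #{w | χ w = j} := by
  have recolor_apply (w : W) : H.recolorOfEmbedding e χ w = e (χ w) := rfl
  simp_rw [recolor_apply]
  refine (Fintype.prod_of_injective e e.injective _ _ (fun i hi ↦ ?_) fun j ↦ ?_).symm
  · rw [filter_false_of_mem fun w _ hw ↦ hi ⟨χ w, hw⟩, card_empty, Nat.descFactorial_zero]
  · simp only [e.apply_eq_iff_eq]

theorem sum_coloring_with_same_classes {M : Type*} [AddCommMonoid M] (χ₀ : H.Coloring κ)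
    [DecidablePred fun χ : H.Coloring ι ↦ ∀ v w, χ v = χ w ↔ χ₀ v = χ₀ w]
    (hχ₀ : Surjective χ₀) (F : H.Coloring ι → M) :
    ∑ χ : H.Coloring ι with ∀ v w, χ v = χ w ↔ χ₀ v = χ₀ w, F χ =
      ∑ e : κ ↪ ι, F (H.recolorOfEmbedding e χ₀) := by
  refine (sum_nbij (fun e ↦ H.recolorOfEmbedding e χ₀) ?_ ?_ ?_ fun _ _ ↦ rfl).symm
  · intro e _
    exact mem_filter.2 ⟨mem_univ _, fun v w ↦ e.apply_eq_iff_eq _ _⟩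
  · intro e _ e' _ h
    ext j
    obtain ⟨w, rfl⟩ := hχ₀ j
    exact DFunLike.congr_fun h w
  · intro χ hχ
    have same_classes : ∀ v w, χ v = χ w ↔ χ₀ v = χ₀ w := (mem_filter.1 hχ).2
    have χ₀_surjInv (j : κ) : χ₀ (surjInv hχ₀ j) = j := surjInv_eq hχ₀ j
    refine ⟨⟨χ ∘ surjInv hχ₀, ?_⟩, mem_univ _, ?_⟩
    · intro i j h
      simpa only [χ₀_surjInv] using (same_classes _ _).1 h
    · ext w
      exact (same_classes _ _).2 (χ₀_surjInv (χ₀ w))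

end Coloring

section Pentagon

variable {α β ι : Type*}

/-- The diagonals of the pentagon whose two ends have the same colour; `r` stands for the diagonal
from `r` to `r + 2`. -/
def monochromaticDiagonals [DecidableEq α] (χ : (cycleGraph 5).Coloring α) : Finset (Fin 5) :=
  {r | χ r = χ (r + 2)}

theorem mem_monochromaticDiagonals [DecidableEq α] {χ : (cycleGraph 5).Coloring α} {r : Fin 5} :
    r ∈ monochromaticDiagonals χ ↔ χ r = χ (r + 2) :=
  mem_filter_univ r

theorem add_two_notMem_monochromaticDiagonals [DecidableEq α] (χ : (cycleGraph 5).Coloring α)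
    {r : Fin 5} (hr : r ∈ monochromaticDiagonals χ) : r + 2 ∉ monochromaticDiagonals χ := by
  have adj : (cycleGraph 5).Adj r (r + 2 + 2) := by clear hr; decide +revert
  rw [mem_monochromaticDiagonals] at hr ⊢
  exact fun hr' ↦ χ.valid adj (hr.trans hr')

theorem monochromaticDiagonals_eq_iff [DecidableEq α] [DecidableEq β]
    {χ : (cycleGraph 5).Coloring α} {ψ : (cycleGraph 5).Coloring β} :
    monochromaticDiagonals χ = monochromaticDiagonals ψ ↔ ∀ v w, χ v = χ w ↔ ψ v = ψ w := by
  simp_rw [Finset.ext_iff, mem_monochromaticDiagonals]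
  refine ⟨fun diagonal_iff v w ↦ ?_, fun h r ↦ h r (r + 2)⟩
  have eq_or_adj_or_diagonal : v = w ∨ (cycleGraph 5).Adj v w ∨ w = v + 2 ∨ v = w + 2 := by
    decide +revert
  rcases eq_or_adj_or_diagonal with rfl | h | rfl | rfl
  · simp only
  · simp only [χ.valid h, ψ.valid h]
  · exact diagonal_iff v
  · simpa only [eq_comm] using diagonal_iff w

theorem sum_pentagram_independent {M : Type*} [AddCommMonoid M] (F : Finset (Fin 5) → M) :
    ∑ S with ∀ r ∈ S, r + 2 ∉ S, F S = F ∅ + ∑ r, F {r} + ∑ r, F {r, r + 1} := by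
  have independent_eq : ({S | ∀ r ∈ S, r + 2 ∉ S} : Finset (Finset (Fin 5))) =
      insert ∅ (univ.image (fun r ↦ {r}) ∪ univ.image fun r ↦ {r, r + 1}) := by
    decide
  rw [independent_eq, sum_insert (by decide), sum_union (by decide), sum_image (by decide),
    sum_image (by decide), add_assoc]

/-- The colouring of the pentagon whose colour classes are the diagonal from `r` to `r + 2`, with
colour `none`, and three singletons. -/
def onePairColoring (r : Fin 5) : (cycleGraph 5).Coloring (Option (Fin 3)) :=
  .mk (fun i ↦ ![none, some 0, none, some 1, some 2] (i - r)) (by decide +revert)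

/-- The colouring of the pentagon whose colour classes are the diagonals from `r` to `r + 2` and
from `r + 1` to `r + 3`, and a singleton with colour `none`. -/
def twoPairColoring (r : Fin 5) : (cycleGraph 5).Coloring (Option (Fin 2)) :=
  .mk (fun i ↦ ![some 0, some 1, some 0, some 1, none] (i - r)) (by decide +revert)

theorem onePairColoring_surjective (r : Fin 5) : Surjective (onePairColoring r) := by
  unfold Surjective
  decide +revert

theorem twoPairColoring_surjective (r : Fin 5) : Surjective (twoPairColoring r) := by
  unfold Surjective
  decide +revert

theorem monochromaticDiagonals_selfColoring :
    monochromaticDiagonals (cycleGraph 5).selfColoring = ∅ := by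
  decide

theorem monochromaticDiagonals_onePairColoring (r : Fin 5) :
    monochromaticDiagonals (onePairColoring r) = {r} := by
  decide +revert

theorem monochromaticDiagonals_twoPairColoring (r : Fin 5) :
    monochromaticDiagonals (twoPairColoring r) = {r, r + 1} := by
  decide +revert

variable [Fintype ι]

theorem sum_coloring_with_same_monochromaticDiagonals {κ M : Type*} [Fintype κ] [DecidableEq κ]
    [DecidableEq ι] [AddCommMonoid M] {χ₀ : (cycleGraph 5).Coloring κ} (hχ₀ : Surjective χ₀)
    (F : (cycleGraph 5).Coloring ι → M) :
    ∑ χ with monochromaticDiagonals χ = monochromaticDiagonals χ₀, F χ =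
      ∑ e : κ ↪ ι, F ((cycleGraph 5).recolorOfEmbedding e χ₀) := by
  simp_rw [monochromaticDiagonals_eq_iff, sum_coloring_with_same_classes χ₀ hχ₀]

theorem sum_coloring_cycleGraph_five {M : Type*} [AddCommMonoid M]
    (F : (cycleGraph 5).Coloring ι → M) :
    ∑ χ, F χ =
      ∑ e : Fin 5 ↪ ι, F ((cycleGraph 5).recolorOfEmbedding e (cycleGraph 5).selfColoring) +
      ∑ r, ∑ e : Option (Fin 3) ↪ ι, F ((cycleGraph 5).recolorOfEmbedding e (onePairColoring r)) +
      ∑ r, ∑ e : Option (Fin 2) ↪ ι,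
        F ((cycleGraph 5).recolorOfEmbedding e (twoPairColoring r)) := by
  classical
  have maps_to (χ : (cycleGraph 5).Coloring ι) (_ : χ ∈ univ) :
      monochromaticDiagonals χ ∈ ({S | ∀ r ∈ S, r + 2 ∉ S} : Finset (Finset (Fin 5))) :=
    mem_filter.2 ⟨mem_univ _, fun _ ↦ add_two_notMem_monochromaticDiagonals χ⟩
  rw [← sum_fiberwise_of_maps_to maps_to, sum_pentagram_independent]
  congr! with r _ r _
  · rw [← monochromaticDiagonals_selfColoring,
      sum_coloring_with_same_monochromaticDiagonals surjective_id]
  · rw [← monochromaticDiagonals_onePairColoring,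
      sum_coloring_with_same_monochromaticDiagonals (onePairColoring_surjective r)]
  · rw [← monochromaticDiagonals_twoPairColoring,
      sum_coloring_with_same_monochromaticDiagonals (twoPairColoring_surjective r)]

variable [DecidableEq ι]

theorem sum_coloring_cycleGraph_five_prod_descFactorial (x : ι → ℕ) :
    ∑ χ : (cycleGraph 5).Coloring ι, ∏ i, (x i).descFactorial #{w | χ w = i} =
      ∑ e : Fin 5 ↪ ι, ∏ j, x (e j) +
      10 * ∑ e : Option (Fin 3) ↪ ι, (x (e none)).choose 2 * ∏ j, x (e (some j)) +
      20 * ∑ e : Option (Fin 2) ↪ ι, x (e none) * ∏ j, (x (e (some j))).choose 2 := by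
  have self_card (j : Fin 5) : #{w | (cycleGraph 5).selfColoring w = j} = 1 := by
    decide +revert
  have onePair_card (r : Fin 5) (j : Option (Fin 3)) :
      #{w | onePairColoring r w = j} = j.elim 2 fun _ ↦ 1 := by
    decide +revert
  have twoPair_card (r : Fin 5) (j : Option (Fin 2)) :
      #{w | twoPairColoring r w = j} = j.elim 1 fun _ ↦ 2 := by
    decide +revert
  have descFactorial_two (m : ℕ) : m.descFactorial 2 = 2 * m.choose 2 :=
    m.descFactorial_eq_factorial_mul_choose 2
  rw [sum_coloring_cycleGraph_five]
  simp_rw [prod_descFactorial_card_recolorOfEmbedding, self_card, onePair_card, twoPair_card,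
    Fintype.prod_option, Option.elim, Nat.descFactorial_one, descFactorial_two, prod_mul_distrib]
  simp only [sum_const, prod_const, card_univ, Fintype.card_fin, smul_eq_mul, mul_assoc,
    mul_left_comm _ (2 ^ 2), ← mul_sum]
  ring

theorem labelledCopyCount_cycleGraph_five (V : ι → Type*) [∀ i, Fintype (V i)] :
    (completeMultipartiteGraph V).labelledCopyCount (cycleGraph 5) =
      120 * ∑ s ∈ (univ : Finset ι).powersetCard 5, ∏ i ∈ s, Fintype.card (V i) +
      60 * ∑ a, (Fintype.card (V a)).choose 2 *
        ∑ s ∈ (univ.erase a).powersetCard 3, ∏ i ∈ s, Fintype.card (V i) +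
      40 * ∑ s ∈ univ.powersetCard 2,
        (∏ i ∈ s, (Fintype.card (V i)).choose 2) * ∑ c ∈ univ \ s, Fintype.card (V c) := by
  rw [labelledCopyCount_completeMultipartiteGraph,
    sum_coloring_cycleGraph_five_prod_descFactorial,
    sum_embedding_prod fun i ↦ Fintype.card (V i),
    sum_embedding_option_prod (fun i ↦ Fintype.card (V i)) fun i ↦ (Fintype.card (V i)).choose 2,
    sum_embedding_option_prod (fun i ↦ (Fintype.card (V i)).choose 2) fun i ↦ Fintype.card (V i)]
  simp only [Fintype.card_fin,
    sum_powersetCard_mul_sum_sdiff fun i ↦ (Fintype.card (V i)).choose 2]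
  norm_num [Nat.factorial, ← mul_assoc]

theorem stmt_12_general (V : ι → Type*) [∀ i, Fintype (V i)] :
    nuC5 (completeMultipartiteGraph V) =
      12 * ∑ s ∈ (univ : Finset ι).powersetCard 5, ∏ i ∈ s, Fintype.card (V i) +
      6 * ∑ a, (Fintype.card (V a)).choose 2 *
        ∑ s ∈ (univ.erase a).powersetCard 3, ∏ i ∈ s, Fintype.card (V i) +
      4 * ∑ s ∈ univ.powersetCard 2,
        (∏ i ∈ s, (Fintype.card (V i)).choose 2) * ∑ c ∈ univ \ s, Fintype.card (V c) := by
  have labelled_eq : (completeMultipartiteGraph V).labelledCopyCount (cycleGraph 5) =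
      nuC5 (completeMultipartiteGraph V) * 10 := by
    rw [labelledCopyCount_eq_copyCount_mul_card_aut, card_aut_cycleGraph, nuC5_eq_copyCount]
  rw [labelledCopyCount_cycleGraph_five] at labelled_eq
  omega

end Pentagon

theorem stmt_12 (k : ℕ) (x : Fin k → ℕ) :
    nuC5 (SimpleGraph.completeMultipartiteGraph (fun t => Fin (x t))) =
      12 * ∑ s ∈ (Finset.univ : Finset (Fin k)).powersetCard 5, ∏ i ∈ s, x i
      + 6 * ∑ a : Fin k, (x a).choose 2 *
          ∑ s ∈ ((Finset.univ : Finset (Fin k)).erase a).powersetCard 3, ∏ i ∈ s, x i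
      + 4 * ∑ s ∈ (Finset.univ : Finset (Fin k)).powersetCard 2,
          (∏ i ∈ s, (x i).choose 2) * ∑ c ∈ (Finset.univ : Finset (Fin k)) \ s, x c := by
  simpa only [Fintype.card_fin] using stmt_12_general fun t ↦ Fin (x t)
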